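/- (Dual characterization for metric costs) Let d be a lower semicontinuous metric on a Polish space 𝒳, α ∈ 𝒜, and μ ∈ P(𝒳). The following are equivalent: (1) α(𝒯_d(ν,μ)) ≤ H(ν|μ) for all ν ∈ P(𝒳); (2) for every bounded Borel measurable function f on 𝒳 with |f(x) − f(y)| ≤ d(x,y) for all x,y ∈ 𝒳, and every s ≥ 0, ∫ e^{s f} dμ ≤ exp( s ∫ f dμ + α⊛(s) ). -/

import Mathlib

open MeasureTheory ENNReal

/-- The optimal transport cost `𝒯_c(ν, μ)` associated with the cost function `c`:
the infimum of `∫ c dπ` over all couplings `π` of `ν` and `μ`. -/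
noncomputable def optCost {X : Type*} [MeasurableSpace X] (c : X → X → ℝ)
    (ν μ : Measure X) : ℝ≥0∞ :=
  ⨅ (π : Measure (X × X)) (_ : π.map Prod.fst = ν ∧ π.map Prod.snd = μ),
    ∫⁻ p, ENNReal.ofReal (c p.1 p.2) ∂π

open Classical in
/-- The relative entropy `H(ν|μ)`: it equals `∫ h(dν/dμ) dμ` with
`h(t) = t log t - t + 1 ≥ 0` if `ν ≪ μ`, and `+∞` otherwise.  For probability
measures `ν ≪ μ` this coincides with `∫ log (dν/dμ) dν`. -/
noncomputable def relEntropy {X : Type*} [MeasurableSpace X] (ν μ : Measure X) : ℝ≥0∞ :=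
  if ν ≪ μ then
    ∫⁻ x, ENNReal.ofReal ((ν.rnDeriv μ x).toReal * Real.log (ν.rnDeriv μ x).toReal
      - (ν.rnDeriv μ x).toReal + 1) ∂μ
  else ∞

/-- The natural extension to `ℝ≥0∞` of a function `α : [0,∞) → [0,∞)`.
For an increasing `α` and `x < ∞` it equals `ENNReal.ofReal (α x.toReal)`,
and at `x = ∞` it is the limit of `α` at `+∞` (so `∞` when `α` is unbounded). -/
noncomputable def extRealFun (α : ℝ → ℝ) (x : ℝ≥0∞) : ℝ≥0∞ :=
  ⨆ (t : ℝ) (_ : 0 ≤ t ∧ ENNReal.ofReal t ≤ x), ENNReal.ofReal (α t)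

/-!
Write `𝒯` for the transport cost of `d`. Three dualities turn both conditions into the same family
of inequalities `s ∫ f dν - s ∫ f dμ ≤ H(ν|μ) + α⊛(s)`, indexed by `ν`, `s ≥ 0` and bounded
measurable `d`-Lipschitz `f`. Convex duality says that `α(𝒯) ≤ H` iff `s 𝒯 ≤ H + α⊛(s)` for all
`s ≥ 0`. Kantorovich–Rubinstein duality writes `𝒯(ν, μ)` as the supremum of `∫ f dν - ∫ f dμ` over
such `f`. Donsker–Varadhan duality evaluates the supremum over `ν` of `s ∫ f dν - H(ν|μ)` as
`log ∫ exp (s f) dμ`.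

Since `d` need not metrize the topology of `X`, Kantorovich–Rubinstein duality is derived from
Kantorovich duality with continuous potentials: for `φ x + ψ y ≤ d x y`, the infimal convolution of
`d` with `-ψ` over a compact set carrying most of `μ` is measurable, `d`-Lipschitz, above `φ`
everywhere and below `-ψ` on that set. Kantorovich duality itself comes from the M. Riesz extension
theorem and the Riesz–Markov–Kakutani representation on the square of the Hilbert cube.
-/

open Filter Set Topology CompactlySupported BoundedContinuousFunction

/-! ### The monotone conjugate -/

theorem exists_forall_add_mul_sub_le {s : Set ℝ} {α : ℝ → ℝ} (hα : ConvexOn ℝ s α) {t : ℝ}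
    (ht : t ∈ interior s) : ∃ a, ∀ u ∈ s, α t + a * (u - t) ≤ α u := by
  refine ⟨derivWithin α (Set.Ioi t) t, fun u hu => ?_⟩
  rcases lt_trichotomy u t with hut | rfl | htu
  · have h := (hα.slope_le_leftDeriv_of_mem_interior hu ht hut).trans
      (hα.leftDeriv_le_rightDeriv_of_mem_interior ht)
    rw [slope_def_field, div_le_iff₀ (by linarith)] at h
    linarith
  · simp
  · have h := hα.rightDeriv_le_slope_of_mem_interior ht hu htu
    rw [slope_def_field, le_div_iff₀ (by linarith)] at h
    linarith

/-- The monotone conjugate `α⊛(s) = sup_{r ≥ 0} (s r - α r)`, for which `α` only matters on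
`[0, ∞)`. It takes values in `ℝ≥0∞`: negative terms are replaced by `0`, which does not change
the supremum when `α 0 ≤ 0`. -/
noncomputable def monotoneConjugate (α : ℝ → ℝ) (s : ℝ) : ℝ≥0∞ :=
  ⨆ (r : ℝ) (_ : 0 ≤ r), ENNReal.ofReal (s * r - α r)

theorem ofReal_mul_le_add_monotoneConjugate (α : ℝ → ℝ) {s : ℝ} (hs : 0 ≤ s) (x : ℝ≥0∞) :
    ENNReal.ofReal s * x ≤ extRealFun α x + monotoneConjugate α s := by
  refine ENNReal.mul_le_of_forall_lt fun a ha b hb => ?_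
  lift b to NNReal using hb.ne_top
  calc a * b ≤ ENNReal.ofReal s * ENNReal.ofReal b := by
        rw [ENNReal.ofReal_coe_nnreal]; gcongr
    _ = ENNReal.ofReal (α b + (s * b - α b)) := by
        rw [← ENNReal.ofReal_mul hs, add_sub_cancel]
    _ ≤ ENNReal.ofReal (α b) + ENNReal.ofReal (s * b - α b) := ENNReal.ofReal_add_le
    _ ≤ extRealFun α x + monotoneConjugate α s := by
        refine add_le_add (le_iSup₂_of_le (b : ℝ) ⟨b.2, ?_⟩ le_rfl)
          (le_iSup₂_of_le (b : ℝ) b.2 le_rfl)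
        rw [ENNReal.ofReal_coe_nnreal]
        exact hb.le

theorem ofReal_le_of_forall_le_add_monotoneConjugate {α : ℝ → ℝ}
    (hα : ConvexOn ℝ (Set.Ici 0) α) (hα_zero : α 0 ≤ 0) {t : ℝ} (ht : 0 ≤ t) {b : ℝ≥0∞}
    (h : ∀ s, 0 ≤ s → ENNReal.ofReal (s * t) ≤ b + monotoneConjugate α s) :
    ENNReal.ofReal (α t) ≤ b := by
  rcases le_or_gt (α t) 0 with hαt | hαt
  · simp [ENNReal.ofReal_of_nonpos hαt]
  have ht_pos : 0 < t := ht.lt_of_ne (by rintro rfl; exact hα_zero.not_gt hαt)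
  obtain ⟨s, hs⟩ := exists_forall_add_mul_sub_le hα (by rwa [interior_Ici] : t ∈ _)
  have hst : α t ≤ s * t := by linarith [hs 0 Set.self_mem_Ici]
  have hs_nonneg : 0 ≤ s := nonneg_of_mul_nonneg_left (hαt.le.trans hst) ht_pos
  have hconj : monotoneConjugate α s ≤ ENNReal.ofReal (s * t - α t) :=
    iSup₂_le fun u hu => ENNReal.ofReal_le_ofReal (by linarith [hs u hu])
  calc ENNReal.ofReal (α t) = ENNReal.ofReal (s * t - (s * t - α t)) := by rw [sub_sub_self]
    _ = ENNReal.ofReal (s * t) - ENNReal.ofReal (s * t - α t) :=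
        ENNReal.ofReal_sub _ (sub_nonneg.2 hst)
    _ ≤ b := tsub_le_iff_right.2 ((h s hs_nonneg).trans (by gcongr))

theorem extRealFun_le_iff {α : ℝ → ℝ} (hα : ConvexOn ℝ (Set.Ici 0) α) (hα_zero : α 0 ≤ 0)
    {x b : ℝ≥0∞} :
    extRealFun α x ≤ b ↔ ∀ s, 0 ≤ s → ENNReal.ofReal s * x ≤ b + monotoneConjugate α s := by
  refine ⟨fun h s hs => (ofReal_mul_le_add_monotoneConjugate α hs x).trans (by gcongr),
    fun h => iSup₂_le fun t ht => ?_⟩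
  refine ofReal_le_of_forall_le_add_monotoneConjugate hα hα_zero ht.1 fun s hs => ?_
  rw [ENNReal.ofReal_mul hs]
  exact (mul_le_mul_right ht.2 _).trans (h s hs)

theorem ofReal_le_iSup_ofReal_iff {ι : Type*} {v : ι → ℝ} (hv : ∃ i, 0 ≤ v i) {z : ℝ} :
    ENNReal.ofReal z ≤ ⨆ i, ENNReal.ofReal (v i) ↔ ∀ c, (∀ i, v i ≤ c) → z ≤ c := by
  obtain ⟨i₀, hi₀⟩ := hv
  constructor
  · intro h c hc
    refine (ENNReal.ofReal_le_ofReal_iff (hi₀.trans (hc i₀))).1 (h.trans (iSup_le fun i => ?_))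
    exact ENNReal.ofReal_le_ofReal (hc i)
  · intro h
    refine le_iSup_iff.2 fun b hb => ?_
    obtain rfl | hb_top := eq_or_ne b ⊤
    · exact le_top
    · exact ENNReal.ofReal_le_of_le_toReal
        (h _ fun i => (ENNReal.ofReal_le_iff_le_toReal hb_top).1 (hb i))

theorem ofReal_le_iSup_ofReal_exp_iff {ι : Type*} {u : ι → ℝ} (hu : ∃ i, 0 ≤ u i) {Z : ℝ}
    (hZ : 0 < Z) (a : ℝ) :
    ENNReal.ofReal Z ≤ ⨆ i, ENNReal.ofReal (Real.exp (a + u i)) ↔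
      ENNReal.ofReal (Real.log Z - a) ≤ ⨆ i, ENNReal.ofReal (u i) := by
  have hexp : ∃ i, 0 ≤ Real.exp (a + u i) := hu.imp fun i _ => (Real.exp_pos _).le
  rw [ofReal_le_iSup_ofReal_iff hexp, ofReal_le_iSup_ofReal_iff hu]
  constructor
  · intro h c hc
    have hle : Z ≤ Real.exp (a + c) := h _ fun i => by gcongr; exact hc i
    linarith [(Real.log_le_iff_le_exp hZ).2 hle]
  · intro h c hc
    obtain ⟨i₀, -⟩ := hu
    have hc_pos : 0 < c := (Real.exp_pos _).trans_le (hc i₀)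
    have hle : Real.log Z - a ≤ Real.log c - a := h _ fun i => by
      linarith [(Real.le_log_iff_exp_le hc_pos).2 (hc i)]
    exact (Real.log_le_log_iff hZ hc_pos).1 (by linarith)

theorem ofReal_le_iSup_ofReal_exp_add_iff {α : ℝ → ℝ} (hα_zero : α 0 ≤ 0) {Z : ℝ}
    (hZ : 0 < Z) (a s : ℝ) :
    ENNReal.ofReal Z ≤ ⨆ (r : ℝ) (_ : 0 ≤ r), ENNReal.ofReal (Real.exp (a + (s * r - α r))) ↔
      ENNReal.ofReal (Real.log Z - a) ≤ monotoneConjugate α s := by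
  rw [monotoneConjugate, iSup_subtype', iSup_subtype']
  exact ofReal_le_iSup_ofReal_exp_iff ⟨⟨0, le_rfl⟩, by simpa using hα_zero⟩ hZ a

/-! ### Donsker–Varadhan duality -/

section DonskerVaradhan

open InformationTheory

variable {X : Type*} [MeasurableSpace X] {μ : Measure X} {g : X → ℝ}

theorem relEntropy_eq_klDiv (ν μ : Measure X) [IsFiniteMeasure ν] [IsFiniteMeasure μ] :
    relEntropy ν μ = klDiv ν μ := by
  rw [relEntropy, klDiv_eq_lintegral_klFun]
  simp only [klFun_apply, sub_add_eq_add_sub]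

theorem integrable_exp_of_le [IsFiniteMeasure μ] {M : ℝ} (hg : Measurable g)
    (hM : ∀ x, g x ≤ M) : Integrable (fun x => Real.exp (g x)) μ :=
  .of_bound hg.exp.aestronglyMeasurable (Real.exp M) <| ae_of_all _ fun x => by
    rw [Real.norm_eq_abs, Real.abs_exp]
    exact Real.exp_le_exp.2 (hM x)

theorem llr_tilted_self_ae_eq [SigmaFinite μ]
    (hexp : Integrable (fun x => Real.exp (g x)) μ) :
    llr (μ.tilted g) μ =ᵐ[μ.tilted g] fun x => g x - Real.log (∫ x, Real.exp (g x) ∂μ) :=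
  tilted_absolutelyContinuous μ g (log_rnDeriv_tilted_left_self hexp)

theorem klDiv_tilted_self_ne_top [IsFiniteMeasure μ] (hg : Integrable g (μ.tilted g))
    (hexp : Integrable (fun x => Real.exp (g x)) μ) : klDiv (μ.tilted g) μ ≠ ⊤ :=
  klDiv_ne_top (tilted_absolutelyContinuous μ g)
    ((hg.sub (integrable_const _)).congr (llr_tilted_self_ae_eq hexp).symm)

variable [IsProbabilityMeasure μ]

theorem toReal_klDiv_tilted_self (hg : Integrable g (μ.tilted g))
    (hexp : Integrable (fun x => Real.exp (g x)) μ) :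
    (klDiv (μ.tilted g) μ).toReal =
      ∫ x, g x ∂(μ.tilted g) - Real.log (∫ x, Real.exp (g x) ∂μ) := by
  have := isProbabilityMeasure_tilted hexp
  rw [toReal_klDiv_of_measure_eq (tilted_absolutelyContinuous μ g) (by simp),
    integral_congr_ae (llr_tilted_self_ae_eq hexp), integral_sub hg (integrable_const _)]
  simp

theorem ofReal_integral_sub_log_integral_exp_le_klDiv {ν : Measure X} [IsProbabilityMeasure ν]
    (hg : Integrable g ν) (hexp : Integrable (fun x => Real.exp (g x)) μ) :
    ENNReal.ofReal (∫ x, g x ∂ν - Real.log (∫ x, Real.exp (g x) ∂μ)) ≤ klDiv ν μ := by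
  obtain hkl | hkl := eq_or_ne (klDiv ν μ) ⊤
  · exact hkl ▸ le_top
  obtain ⟨hac, hllr⟩ := klDiv_ne_top_iff.1 hkl
  have := isProbabilityMeasure_tilted hexp
  have h_gibbs : 0 ≤ ∫ x, llr ν (μ.tilted g) x ∂ν := by
    simpa using integral_llr_add_sub_measure_univ_nonneg
      (hac.trans (absolutelyContinuous_tilted hexp))
      (integrable_llr_tilted_right hac hg hllr hexp)
  rw [integral_llr_tilted_right hac hg hexp hllr] at h_gibbs
  refine ENNReal.ofReal_le_of_le_toReal ?_
  rw [toReal_klDiv_of_measure_eq hac (by simp)]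
  linarith

theorem ofReal_log_integral_exp_sub_le_iff {M : ℝ} (hg : Measurable g) (hM : ∀ x, |g x| ≤ M)
    (a : ℝ) (C : ℝ≥0∞) :
    ENNReal.ofReal (Real.log (∫ x, Real.exp (g x) ∂μ) - a) ≤ C ↔
      ∀ ν : Measure X, IsProbabilityMeasure ν →
        ENNReal.ofReal (∫ x, g x ∂ν - a) ≤ relEntropy ν μ + C := by
  have hint (ν : Measure X) [IsProbabilityMeasure ν] : Integrable g ν :=
    .of_bound hg.aestronglyMeasurable M (ae_of_all _ hM)
  have hexp : Integrable (fun x => Real.exp (g x)) μ :=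
    integrable_exp_of_le hg fun x => le_of_abs_le (hM x)
  set Λ := Real.log (∫ x, Real.exp (g x) ∂μ) with hΛ
  constructor
  · intro h ν _
    rw [relEntropy_eq_klDiv]
    calc ENNReal.ofReal (∫ x, g x ∂ν - a) = ENNReal.ofReal ((∫ x, g x ∂ν - Λ) + (Λ - a)) := by
          rw [sub_add_sub_cancel]
      _ ≤ ENNReal.ofReal (∫ x, g x ∂ν - Λ) + ENNReal.ofReal (Λ - a) := ENNReal.ofReal_add_le
      _ ≤ klDiv ν μ + C :=
          add_le_add (ofReal_integral_sub_log_integral_exp_le_klDiv (hint ν) hexp) h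
  · intro h
    have := isProbabilityMeasure_tilted hexp
    have h_tilted := h (μ.tilted g) this
    rw [relEntropy_eq_klDiv] at h_tilted
    have hkl := toReal_klDiv_tilted_self (hint (μ.tilted g)) hexp
    calc ENNReal.ofReal (Λ - a)
        = ENNReal.ofReal (∫ x, g x ∂(μ.tilted g) - a - (klDiv (μ.tilted g) μ).toReal) := by
          rw [hkl, ← hΛ]; ring_nf
      _ = ENNReal.ofReal (∫ x, g x ∂(μ.tilted g) - a) - klDiv (μ.tilted g) μ := by
          rw [ENNReal.ofReal_sub _ ENNReal.toReal_nonneg,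
            ENNReal.ofReal_toReal (klDiv_tilted_self_ne_top (hint _) hexp)]
      _ ≤ C := tsub_le_iff_left.2 h_tilted

end DonskerVaradhan

/-! ### Infimal convolutions -/

/-- The infimal convolution of the cost `c` with `u`, i.e. the `c`-transform of `-u`. For a
pseudometric `c` on `X = S` it is the largest `c`-Lipschitz function below `u`, and for
`c = n * dist` the Pasch–Hausdorff regularization of `u`. It is only meaningful when `c x · + u`
is bounded below. -/
noncomputable def infConvolution {X S : Type*} (c : X → S → ℝ) (u : S → ℝ) (x : X) : ℝ :=
  ⨅ y, (c x y + u y)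

section InfConvolution

variable {X S : Type*} {c : X → S → ℝ} {u : S → ℝ} {m : ℝ} {x : X}

theorem bddBelow_range_add (hc : ∀ y, 0 ≤ c x y) (hu : ∀ y, m ≤ u y) :
    BddBelow (Set.range fun y => c x y + u y) :=
  ⟨m, Set.forall_mem_range.2 fun y => by linarith [hc y, hu y]⟩

theorem infConvolution_le (hc : ∀ y, 0 ≤ c x y) (hu : ∀ y, m ≤ u y) (y : S) :
    infConvolution c u x ≤ c x y + u y :=
  ciInf_le (bddBelow_range_add hc hu) y

theorem le_infConvolution [Nonempty S] {a : ℝ} (h : ∀ y, a ≤ c x y + u y) :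
    a ≤ infConvolution c u x :=
  le_ciInf h

theorem infConvolution_le_add [Nonempty S] {x' : X} {r : ℝ} (hc : ∀ y, 0 ≤ c x y)
    (hu : ∀ y, m ≤ u y) (h : ∀ y, c x y ≤ c x' y + r) :
    infConvolution c u x ≤ infConvolution c u x' + r := by
  rw [← sub_le_iff_le_add]
  exact le_infConvolution fun y => by linarith [infConvolution_le hc hu y, h y]

end InfConvolution

theorem lowerSemicontinuous_iInf_of_compactSpace {X K : Type*} [TopologicalSpace X]
    [TopologicalSpace K] [CompactSpace K] [Nonempty K] {F : X × K → ℝ}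
    (hF : LowerSemicontinuous F) : LowerSemicontinuous fun x => ⨅ y, F (x, y) := by
  refine lowerSemicontinuous_iff_isClosed_preimage.2 fun r => ?_
  have hF_right (x : X) : LowerSemicontinuousOn (fun y => F (x, y)) univ :=
    (hF.comp (by fun_prop : Continuous fun y => (x, y))).lowerSemicontinuousOn _
  have h_iInf_le_iff (x : X) : ⨅ y, F (x, y) ≤ r ↔ ∃ y, F (x, y) ≤ r := by
    obtain ⟨y, -, hy⟩ := (hF_right x).exists_isMinOn univ_nonempty isCompact_univ
    have hbdd : BddBelow (range fun y => F (x, y)) :=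
      ⟨F (x, y), forall_mem_range.2 fun z => hy (mem_univ z)⟩
    exact ⟨fun h => ⟨y, (le_ciInf fun z => hy (mem_univ z)).trans h⟩,
      fun ⟨z, hz⟩ => (ciInf_le hbdd z).trans hz⟩
  have h_image : (fun x => ⨅ y, F (x, y)) ⁻¹' Iic r = Prod.fst '' (F ⁻¹' Iic r) := by
    ext x
    simp [h_iInf_le_iff]
  exact h_image ▸ isClosedMap_fst_of_compactSpace _ (hF.isClosed_preimage r)

section LipschitzRegularization

variable {X Y : Type*} [PseudoMetricSpace Y] {j : X → Y} {u : X → ℝ} {m : ℝ}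

theorem continuous_infConvolution_mul_dist [Nonempty X] (hu : ∀ x, m ≤ u x) {k : ℝ} (hk : 0 ≤ k) :
    Continuous (infConvolution (fun y x => k * dist y (j x)) u) := by
  refine (LipschitzWith.of_le_add_mul (.mk k hk) fun y y' => ?_).continuous
  refine infConvolution_le_add (fun x => by positivity) hu fun x => ?_
  rw [NNReal.coe_mk, ← mul_add, add_comm]
  gcongr
  exact dist_triangle y y' (j x)

theorem infConvolution_mul_dist_le (hu : ∀ x, m ≤ u x) {k : ℝ} (hk : 0 ≤ k) (x : X) :
    infConvolution (fun y x => k * dist y (j x)) u (j x) ≤ u x := by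
  simpa using infConvolution_le (c := fun y x => k * dist y (j x)) (x := j x)
    (fun x' => by positivity) hu x

theorem tendsto_infConvolution_mul_dist [TopologicalSpace X] (hj : IsInducing j)
    (hu : ∀ x, m ≤ u x) {x : X} (hux : LowerSemicontinuousAt u x) :
    Tendsto (fun n : ℕ => infConvolution (fun y x => n * dist y (j x)) u (j x)) atTop
      (𝓝 (u x)) := by
  have : Nonempty X := ⟨x⟩
  refine tendsto_order.2 ⟨fun c hc => ?_, fun c hc =>
    .of_forall fun n => (infConvolution_mul_dist_le hu n.cast_nonneg x).trans_lt hc⟩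
  obtain ⟨b, hcb, hbu⟩ := exists_between hc
  obtain ⟨ε, hε, hball⟩ := (Metric.nhds_basis_ball.comap j).eventually_iff.1
    (hj.nhds_eq_comap x ▸ hux b hbu)
  filter_upwards [eventually_ge_atTop ⌈(b - m) / ε⌉₊] with n hn
  refine hcb.trans_le (le_infConvolution fun x' => ?_)
  rcases lt_or_ge (dist (j x') (j x)) ε with hx' | hx'
  · exact (hball hx').le.trans (le_add_of_nonneg_left (by positivity))
  · have hnε : b - m ≤ n * dist (j x) (j x') :=
      calc b - m ≤ n * ε := (div_le_iff₀ hε).1 (Nat.le_of_ceil_le hn)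
        _ ≤ n * dist (j x) (j x') := by rw [dist_comm]; gcongr
    linarith [hu x']

theorem lintegral_ofReal_le_of_forall_continuous_le [TopologicalSpace X] [MeasurableSpace X]
    [OpensMeasurableSpace X] (hj : IsInducing j) (hu : LowerSemicontinuous u)
    (hu_nonneg : ∀ x, 0 ≤ u x) {κ : Measure X} {B : ℝ≥0∞}
    (h : ∀ φ : C(Y, ℝ), (∀ y, 0 ≤ φ y) → (∀ x, φ (j x) ≤ u x) →
      ∫⁻ x, ENNReal.ofReal (φ (j x)) ∂κ ≤ B) :
    ∫⁻ x, ENNReal.ofReal (u x) ∂κ ≤ B := by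
  cases isEmpty_or_nonempty X
  · simp
  let φ (n : ℕ) : C(Y, ℝ) :=
    ⟨infConvolution (fun y x => n * dist y (j x)) u,
      continuous_infConvolution_mul_dist hu_nonneg n.cast_nonneg⟩
  have hφ_nonneg (n : ℕ) (y : Y) : 0 ≤ φ n y :=
    le_infConvolution (c := fun y x => n * dist y (j x)) fun x =>
      add_nonneg (by positivity) (hu_nonneg x)
  have hφ_lim (x : X) : liminf (fun n => ENNReal.ofReal (φ n (j x))) atTop = ENNReal.ofReal (u x) :=
    (ENNReal.tendsto_ofReal (tendsto_infConvolution_mul_dist hj hu_nonneg (hu x))).liminf_eq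
  calc ∫⁻ x, ENNReal.ofReal (u x) ∂κ
      = ∫⁻ x, liminf (fun n => ENNReal.ofReal (φ n (j x))) atTop ∂κ := by simp only [hφ_lim]
    _ ≤ liminf (fun n => ∫⁻ x, ENNReal.ofReal (φ n (j x)) ∂κ) atTop :=
        lintegral_liminf_le fun n =>
          ((φ n).continuous.comp hj.continuous).measurable.ennreal_ofReal
    _ ≤ liminf (fun _ : ℕ => B) atTop :=
        liminf_le_liminf <| .of_forall fun n =>
          h (φ n) (hφ_nonneg n) (infConvolution_mul_dist_le hu_nonneg n.cast_nonneg)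
    _ = B := by simp

end LipschitzRegularization

/-! ### Kantorovich duality -/

theorem exists_linearMap_extending_of_nonneg_of_le {E S : Type*} [AddCommGroup E] [Module ℝ E]
    (ev : E →ₗ[ℝ] S → ℝ) {p : Submodule ℝ E} {F : E →ₗ[ℝ] ℝ} {c : S → ℝ} {V : ℝ}
    (hp : ∀ h, ∃ g ∈ p, 0 ≤ ev (g + h))
    (hF_nonneg : ∀ g ∈ p, 0 ≤ ev g → 0 ≤ F g) (hF_le : ∀ g ∈ p, ev g ≤ c → F g ≤ V) :
    ∃ L : E →ₗ[ℝ] ℝ, (∀ g ∈ p, L g = F g) ∧ (∀ h, 0 ≤ ev h → 0 ≤ L h) ∧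
      ∀ h, ev h ≤ c → L h ≤ V := by
  -- Adjoin `c` to `E` as a formal nonnegative element on which the functional takes the value `V`.
  let C : PointedCone ℝ (E × ℝ) := (PointedCone.positive ℝ (ℝ × (S → ℝ))).comap <|
    (LinearMap.snd ℝ E ℝ).prod (ev.coprod ((LinearMap.id : ℝ →ₗ[ℝ] ℝ).smulRight c))
  have mem_C (h : E) (l : ℝ) : (h, l) ∈ C ↔ 0 ≤ l ∧ 0 ≤ ev h + l • c := by
    simp [C, Prod.le_def]
  let f : E × ℝ →ₗ.[ℝ] ℝ := (F.coprod (V • LinearMap.id)).toPMap (p.prod ⊤)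
  have f_apply (x : f.domain) : f x = F x.1.1 + V * x.1.2 := rfl
  have f_nonneg : ∀ x : f.domain, (x : E × ℝ) ∈ C → 0 ≤ f x := by
    rintro ⟨⟨g, l⟩, hg : g ∈ p ∧ l ∈ ⊤⟩ hgl
    obtain ⟨hl, hgl⟩ := (mem_C g l).1 hgl
    rw [f_apply]
    obtain rfl | hl := hl.eq_or_lt
    · simpa using hF_nonneg g hg.1 (by simpa using hgl)
    · have h_scaled : ev (-l⁻¹ • g) ≤ c := fun s => by
        have hs : 0 ≤ ev g s + l * c s := hgl s
        rw [map_smul, Pi.smul_apply, smul_eq_mul, neg_mul, ← div_eq_inv_mul, ← neg_div,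
          div_le_iff₀ hl]
        linarith
      have h_le := hF_le _ (p.smul_mem _ hg.1) h_scaled
      rw [map_smul, smul_eq_mul, neg_mul, ← div_eq_inv_mul, ← neg_div, div_le_iff₀ hl] at h_le
      linarith
  have f_dense : ∀ y, ∃ x : f.domain, (x : E × ℝ) + y ∈ C := fun (h, l) => by
    obtain ⟨g, hg, hgh⟩ := hp h
    refine ⟨⟨(g, -l), hg, trivial⟩, ?_⟩
    rw [Prod.mk_add_mk, mem_C]
    simpa using hgh
  obtain ⟨G, hG, hG_nonneg⟩ := riesz_extension C f f_nonneg f_dense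
  have hG_apply (g : E) (hg : g ∈ p) (l : ℝ) : G (g, l) = F g + V * l :=
    (hG ⟨(g, l), hg, trivial⟩).trans (f_apply _)
  refine ⟨G ∘ₗ LinearMap.inl ℝ E ℝ, fun g hg => ?_, fun h hh => ?_, fun h hh => ?_⟩
  · simpa using hG_apply g hg 0
  · exact hG_nonneg _ ((mem_C h 0).2 (by simpa using hh))
  · have := hG_nonneg (-h, 1) ((mem_C _ _).2 (by simpa using hh))
    have h1 := hG_apply 0 p.zero_mem 1
    rw [show ((-h, 1) : E × ℝ) = (0, 1) - (h, 0) by simp, map_sub, h1] at this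
    simpa using this

theorem exists_measure_forall_integral_eq {Z : Type*} [TopologicalSpace Z] [CompactSpace Z]
    [T2Space Z] [MeasurableSpace Z] [BorelSpace Z] (L : C(Z, ℝ) →ₗ[ℝ] ℝ)
    (hL : ∀ h, 0 ≤ h → 0 ≤ L h) :
    ∃ π : Measure Z, IsFiniteMeasure π ∧ ∀ h : C(Z, ℝ), ∫ z, h z ∂π = L h := by
  let Λ : C_c(Z, ℝ) →ₚ[ℝ] ℝ := PositiveLinearMap.mk₀
    { toFun := fun h => L h
      map_add' := fun h h' => L.map_add h h'
      map_smul' := fun a h => L.map_smul a h }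
    fun h hh => hL h hh
  exact ⟨RealRMK.rieszMeasure Λ, inferInstance, fun h =>
    RealRMK.integral_rieszMeasure Λ ⟨h, .of_compactSpace _⟩⟩

/-- The functions `(y₁, y₂) ↦ φ y₁ + ψ y₂`: the potentials of the Kantorovich dual problem. -/
def splitFunctions (Y₁ Y₂ : Type*) [TopologicalSpace Y₁] [TopologicalSpace Y₂] :
    Submodule ℝ C(Y₁ × Y₂, ℝ) :=
  LinearMap.range (ContinuousMap.compRightAlgHom ℝ ℝ (.fst : C(Y₁ × Y₂, Y₁))).toLinearMap ⊔
    LinearMap.range (ContinuousMap.compRightAlgHom ℝ ℝ (.snd : C(Y₁ × Y₂, Y₂))).toLinearMap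

theorem mem_splitFunctions {Y₁ Y₂ : Type*} [TopologicalSpace Y₁] [TopologicalSpace Y₂]
    {h : C(Y₁ × Y₂, ℝ)} : h ∈ splitFunctions Y₁ Y₂ ↔
      ∃ (φ : C(Y₁, ℝ)) (ψ : C(Y₂, ℝ)), φ.comp .fst + ψ.comp .snd = h := by
  simp [splitFunctions, Submodule.mem_sup]

theorem integrable_of_compactSpace {Z : Type*} [TopologicalSpace Z] [CompactSpace Z]
    [MeasurableSpace Z] [OpensMeasurableSpace Z] (π : Measure Z) [IsFiniteMeasure π]
    (h : C(Z, ℝ)) : Integrable h π :=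
  h.continuous.integrable_of_hasCompactSupport (.of_compactSpace _)

section Kantorovich

variable {Y₁ Y₂ : Type*} [TopologicalSpace Y₁] [CompactSpace Y₁]
  [TopologicalSpace.MetrizableSpace Y₁] [MeasurableSpace Y₁] [BorelSpace Y₁]
  [TopologicalSpace Y₂] [CompactSpace Y₂] [TopologicalSpace.MetrizableSpace Y₂]
  [MeasurableSpace Y₂] [BorelSpace Y₂]

theorem integral_prod_split (ν : Measure Y₁) (μ : Measure Y₂) [IsProbabilityMeasure ν]
    [IsProbabilityMeasure μ] (φ : C(Y₁, ℝ)) (ψ : C(Y₂, ℝ)) :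
    ∫ z, (φ.comp .fst + ψ.comp .snd : C(Y₁ × Y₂, ℝ)) z ∂ν.prod μ =
      ∫ y, φ y ∂ν + ∫ y, ψ y ∂μ := by
  calc ∫ z, (φ.comp .fst + ψ.comp .snd : C(Y₁ × Y₂, ℝ)) z ∂ν.prod μ
      = ∫ z : Y₁ × Y₂, φ z.1 ∂ν.prod μ + ∫ z : Y₁ × Y₂, ψ z.2 ∂ν.prod μ :=
        integral_add (integrable_of_compactSpace _ (φ.comp .fst))
          (integrable_of_compactSpace _ (ψ.comp .snd))
    _ = ∫ y, φ y ∂ν + ∫ y, ψ y ∂μ := by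
        rw [integral_fun_fst, integral_fun_snd, probReal_univ, probReal_univ, one_smul, one_smul]

theorem map_fst_eq_and_map_snd_eq_of_splitFunctions {ν : Measure Y₁} {μ : Measure Y₂}
    [IsProbabilityMeasure ν] [IsProbabilityMeasure μ] {π : Measure (Y₁ × Y₂)} [IsFiniteMeasure π]
    (hπ : ∀ h ∈ splitFunctions Y₁ Y₂, ∫ z, h z ∂π = ∫ z, h z ∂ν.prod μ) :
    π.map Prod.fst = ν ∧ π.map Prod.snd = μ := by
  constructor <;> refine ext_of_forall_integral_eq_of_IsFiniteMeasure fun f => ?_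
  · rw [integral_map (by fun_prop) (by fun_prop)]
    simpa [integral_fun_fst] using hπ (f.toContinuousMap.comp .fst)
      (mem_splitFunctions.2 ⟨f.toContinuousMap, 0, by simp⟩)
  · rw [integral_map (by fun_prop) (by fun_prop)]
    simpa [integral_fun_snd] using hπ (f.toContinuousMap.comp .snd)
      (mem_splitFunctions.2 ⟨0, f.toContinuousMap, by simp⟩)

theorem exists_plan_of_compactSpace {S : Type*} {j : S → Y₁ × Y₂} {c : S → ℝ} {V : ℝ}
    (ν : Measure Y₁) (μ : Measure Y₂) [IsProbabilityMeasure ν] [IsProbabilityMeasure μ]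
    (hj : ∀ᵐ z ∂ν.prod μ, z ∈ range j)
    (hV : ∀ (φ : C(Y₁, ℝ)) (ψ : C(Y₂, ℝ)), (∀ s, φ (j s).1 + ψ (j s).2 ≤ c s) →
      ∫ y, φ y ∂ν + ∫ y, ψ y ∂μ ≤ V) :
    ∃ π : Measure (Y₁ × Y₂), IsFiniteMeasure π ∧ π.map Prod.fst = ν ∧ π.map Prod.snd = μ ∧
      ∀ h : C(Y₁ × Y₂, ℝ), (∀ s, h (j s) ≤ c s) → ∫ z, h z ∂π ≤ V := by
  let ev : C(Y₁ × Y₂, ℝ) →ₗ[ℝ] S → ℝ :=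
    { toFun := fun h s => h (j s)
      map_add' := fun _ _ => rfl
      map_smul' := fun _ _ => rfl }
  let F : C(Y₁ × Y₂, ℝ) →ₗ[ℝ] ℝ :=
    { toFun := fun h => ∫ z, h z ∂ν.prod μ
      map_add' := fun h h' =>
        integral_add (integrable_of_compactSpace _ h) (integrable_of_compactSpace _ h')
      map_smul' := fun a h => integral_const_mul a h }
  have h_majorant (h : C(Y₁ × Y₂, ℝ)) : ∃ g ∈ splitFunctions Y₁ Y₂, 0 ≤ ev (g + h) :=
    ⟨.const _ ‖h‖, mem_splitFunctions.2 ⟨.const _ ‖h‖, 0, by ext; simp⟩, fun s =>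
      neg_le_iff_add_nonneg'.1 (neg_le_of_abs_le (h.norm_coe_le_norm (j s)))⟩
  have hF_nonneg : ∀ g ∈ splitFunctions Y₁ Y₂, 0 ≤ ev g → 0 ≤ F g := fun g _ hg =>
    integral_nonneg_of_ae <| by
      filter_upwards [hj]
      rintro _ ⟨s, rfl⟩
      exact hg s
  have hF_le : ∀ g ∈ splitFunctions Y₁ Y₂, ev g ≤ c → F g ≤ V := by
    intro g hg hgc
    obtain ⟨φ, ψ, rfl⟩ := mem_splitFunctions.1 hg
    exact (integral_prod_split ν μ φ ψ).trans_le (hV φ ψ hgc)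
  obtain ⟨L, hL_split, hL_nonneg, hL_le⟩ :=
    exists_linearMap_extending_of_nonneg_of_le ev h_majorant hF_nonneg hF_le
  obtain ⟨π, hπ, hπL⟩ := exists_measure_forall_integral_eq L fun h hh =>
    hL_nonneg h fun s => hh (j s)
  obtain ⟨h_fst, h_snd⟩ := map_fst_eq_and_map_snd_eq_of_splitFunctions (π := π) fun h hh =>
    (hπL h).trans (hL_split h hh)
  exact ⟨π, hπ, h_fst, h_snd, fun h hh => (hπL h).trans_le (hL_le h hh)⟩

end Kantorovich

theorem exists_map_prodMap_eq {X₁ X₂ Y₁ Y₂ : Type*} [MeasurableSpace X₁] [MeasurableSpace X₂]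
    [MeasurableSpace Y₁] [MeasurableSpace Y₂] {ι₁ : X₁ → Y₁} {ι₂ : X₂ → Y₂}
    (hι₁ : MeasurableEmbedding ι₁) (hι₂ : MeasurableEmbedding ι₂) {ν : Measure X₁}
    {μ : Measure X₂} {π : Measure (Y₁ × Y₂)} (h_fst : π.map Prod.fst = ν.map ι₁)
    (h_snd : π.map Prod.snd = μ.map ι₂) :
    ∃ κ : Measure (X₁ × X₂), (κ.map Prod.fst = ν ∧ κ.map Prod.snd = μ) ∧
      κ.map (Prod.map ι₁ ι₂) = π := by
  have hι := hι₁.prodMap hι₂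
  have h_range : ∀ᵐ z ∂π, z ∈ range (Prod.map ι₁ ι₂) := by
    have h₁ : ∀ᵐ z ∂π, z.1 ∈ range ι₁ := ae_of_ae_map measurable_fst.aemeasurable <|
      h_fst ▸ ae_map_mem_range ι₁ hι₁.measurableSet_range ν
    have h₂ : ∀ᵐ z ∂π, z.2 ∈ range ι₂ := ae_of_ae_map measurable_snd.aemeasurable <|
      h_snd ▸ ae_map_mem_range ι₂ hι₂.measurableSet_range μ
    filter_upwards [h₁, h₂] with z hz₁ hz₂
    exact range_prodMap ▸ ⟨hz₁, hz₂⟩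
  have h_map : (π.comap (Prod.map ι₁ ι₂)).map (Prod.map ι₁ ι₂) = π := by
    rw [hι.map_comap, Measure.restrict_eq_self_of_ae_mem h_range]
  refine ⟨π.comap (Prod.map ι₁ ι₂), ⟨?_, ?_⟩, h_map⟩
  · refine hι₁.map_injective ?_
    rw [← h_fst, ← h_map, Measure.map_map hι₁.measurable measurable_fst,
      Measure.map_map measurable_fst hι.measurable, h_map]
    rfl
  · refine hι₂.map_injective ?_
    rw [← h_snd, ← h_map, Measure.map_map hι₂.measurable measurable_snd,
      Measure.map_map measurable_snd hι.measurable, h_map]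
    rfl

theorem exists_isEmbedding_hilbertCube (X : Type*) [TopologicalSpace X] [PolishSpace X] :
    ∃ ι : X → ℕ → unitInterval, IsEmbedding ι := by
  let := TopologicalSpace.upgradeIsCompletelyMetrizable X
  exact Metric.PiNatEmbed.exists_embedding_to_hilbert_cube

theorem exists_coupling_lintegral_le {X₁ X₂ : Type*}
    [TopologicalSpace X₁] [PolishSpace X₁] [MeasurableSpace X₁] [BorelSpace X₁]
    [TopologicalSpace X₂] [PolishSpace X₂] [MeasurableSpace X₂] [BorelSpace X₂]
    (ν : Measure X₁) (μ : Measure X₂) [IsProbabilityMeasure ν] [IsProbabilityMeasure μ]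
    {c : X₁ × X₂ → ℝ} (hc : LowerSemicontinuous c) (hc_nonneg : ∀ p, 0 ≤ c p) {V : ℝ}
    (hV : ∀ (φ : X₁ →ᵇ ℝ) (ψ : X₂ →ᵇ ℝ), (∀ p, φ p.1 + ψ p.2 ≤ c p) →
      ∫ x, φ x ∂ν + ∫ y, ψ y ∂μ ≤ V) :
    ∃ κ : Measure (X₁ × X₂), (κ.map Prod.fst = ν ∧ κ.map Prod.snd = μ) ∧
      ∫⁻ p, ENNReal.ofReal (c p) ∂κ ≤ ENNReal.ofReal V := by
  obtain ⟨ι₁, hι₁⟩ := exists_isEmbedding_hilbertCube X₁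
  obtain ⟨ι₂, hι₂⟩ := exists_isEmbedding_hilbertCube X₂
  have hι₁_meas := hι₁.continuous.measurableEmbedding hι₁.injective
  have hι₂_meas := hι₂.continuous.measurableEmbedding hι₂.injective
  have hι_meas := hι₁_meas.prodMap hι₂_meas
  have : IsProbabilityMeasure (ν.map ι₁) :=
    Measure.isProbabilityMeasure_map hι₁_meas.measurable.aemeasurable
  have : IsProbabilityMeasure (μ.map ι₂) :=
    Measure.isProbabilityMeasure_map hι₂_meas.measurable.aemeasurable
  have h_range : ∀ᵐ z ∂(ν.map ι₁).prod (μ.map ι₂), z ∈ range (Prod.map ι₁ ι₂) := by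
    rw [Measure.map_prod_map _ _ hι₁_meas.measurable hι₂_meas.measurable]
    exact ae_map_mem_range _ hι_meas.measurableSet_range _
  obtain ⟨π, _, h_fst, h_snd, hπ⟩ := exists_plan_of_compactSpace (ν.map ι₁) (μ.map ι₂) h_range
    (c := c) (V := V) fun φ ψ hφψ => by
      rw [hι₁_meas.integral_map, hι₂_meas.integral_map]
      exact hV ((BoundedContinuousFunction.mkOfCompact φ).compContinuous ⟨ι₁, hι₁.continuous⟩)
        ((BoundedContinuousFunction.mkOfCompact ψ).compContinuous ⟨ι₂, hι₂.continuous⟩) hφψ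
  obtain ⟨κ, hκ, rfl⟩ := exists_map_prodMap_eq hι₁_meas hι₂_meas h_fst h_snd
  let : MetricSpace (ℕ → unitInterval) := TopologicalSpace.metrizableSpaceMetric _
  refine ⟨κ, hκ, lintegral_ofReal_le_of_forall_continuous_le (hι₁.prodMap hι₂).isInducing hc
    hc_nonneg fun h h_nonneg h_le => ?_⟩
  rw [← hι_meas.lintegral_map (fun z => ENNReal.ofReal (h z)),
    ← ofReal_integral_eq_lintegral_ofReal (integrable_of_compactSpace _ h) (ae_of_all _ h_nonneg)]
  exact ENNReal.ofReal_le_ofReal (hπ h h_le)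

/-! ### Kantorovich–Rubinstein duality -/

/-- The test functions of Kantorovich–Rubinstein duality for the cost `d`: bounded measurable
functions that are `1`-Lipschitz for `d`, a cost unrelated to any distance on `X`. -/
def boundedLipschitz {X : Type*} [MeasurableSpace X] (d : X → X → ℝ) : Set (X → ℝ) :=
  {f | Measurable f ∧ (∃ M : ℝ, ∀ x, |f x| ≤ M) ∧ ∀ x y, |f x - f y| ≤ d x y}

theorem nonneg_of_self_of_symm_of_triangle {X : Type*} {d : X → X → ℝ} (hd_self : ∀ x, d x x = 0)
    (hd_symm : ∀ x y, d x y = d y x) (hd_triangle : ∀ x y z, d x z ≤ d x y + d y z) (x y : X) :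
    0 ≤ d x y := by
  linarith [hd_triangle x y x, hd_self x, hd_symm x y]

theorem integral_le_integral_add_of_le_on {X : Type*} [MeasurableSpace X] {μ : Measure X}
    [IsFiniteMeasure μ] {f u : X → ℝ} (hf : Integrable f μ) (hu : Integrable u μ) {K : Set X}
    (hK : MeasurableSet K) (hfu : ∀ x ∈ K, f x ≤ u x) {C : ℝ} (hC : ∀ x, f x ≤ u x + C) :
    ∫ x, f x ∂μ ≤ ∫ x, u x ∂μ + μ.real Kᶜ * C := by
  have h_ind : Integrable (Kᶜ.indicator fun _ => C) μ :=
    (integrable_const C).indicator hK.compl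
  calc ∫ x, f x ∂μ ≤ ∫ x, (u x + Kᶜ.indicator (fun _ => C) x) ∂μ :=
        integral_mono hf (hu.add h_ind) fun x => by
          by_cases hx : x ∈ K
          · simpa [hx] using hfu x hx
          · simpa [hx] using hC x
    _ = ∫ x, u x ∂μ + μ.real Kᶜ * C := by
        rw [integral_add hu h_ind, integral_indicator_const C hK.compl, smul_eq_mul]

section KantorovichRubinstein

variable {X : Type*} [MeasurableSpace X] {d : X → X → ℝ}

theorem integrable_of_mem_boundedLipschitz {f : X → ℝ} (hf : f ∈ boundedLipschitz d)
    (μ : Measure X) [IsFiniteMeasure μ] : Integrable f μ :=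
  let ⟨M, hM⟩ := hf.2.1
  .of_bound hf.1.aestronglyMeasurable M (ae_of_all _ hM)

theorem ofReal_integral_sub_integral_le_optCost {ν μ : Measure X} [IsFiniteMeasure ν]
    [IsFiniteMeasure μ] {f : X → ℝ} (hf : f ∈ boundedLipschitz d) :
    ENNReal.ofReal (∫ x, f x ∂ν - ∫ x, f x ∂μ) ≤ optCost d ν μ := by
  refine le_iInf₂ fun π hπ => ?_
  obtain ⟨rfl, rfl⟩ := hπ
  have h_fst : Integrable (fun p : X × X => f p.1) π :=
    (integrable_of_mem_boundedLipschitz hf _).comp_measurable measurable_fst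
  have h_snd : Integrable (fun p : X × X => f p.2) π :=
    (integrable_of_mem_boundedLipschitz hf _).comp_measurable measurable_snd
  rw [integral_map measurable_fst.aemeasurable hf.1.aestronglyMeasurable,
    integral_map measurable_snd.aemeasurable hf.1.aestronglyMeasurable,
    ← integral_sub h_fst h_snd]
  calc ENNReal.ofReal (∫ p : X × X, (f p.1 - f p.2) ∂π)
      ≤ ENNReal.ofReal (∫ p : X × X, |f p.1 - f p.2| ∂π) :=
        ENNReal.ofReal_le_ofReal <|
          integral_mono (h_fst.sub h_snd) (h_fst.sub h_snd).abs fun p => le_abs_self _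
    _ = ∫⁻ p : X × X, ENNReal.ofReal |f p.1 - f p.2| ∂π :=
        ofReal_integral_eq_lintegral_ofReal (h_fst.sub h_snd).abs <|
          ae_of_all _ fun p => abs_nonneg _
    _ ≤ ∫⁻ p : X × X, ENNReal.ofReal (d p.1 p.2) ∂π :=
        lintegral_mono fun p => ENNReal.ofReal_le_ofReal (hf.2.2 p.1 p.2)

variable [TopologicalSpace X]

theorem exists_mem_boundedLipschitz_between [BorelSpace X] (hd_self : ∀ x, d x x = 0)
    (hd_symm : ∀ x y, d x y = d y x) (hd_triangle : ∀ x y z, d x z ≤ d x y + d y z)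
    (hd_lsc : LowerSemicontinuous fun p : X × X => d p.1 p.2) {φ u : X → ℝ} {M : ℝ}
    (hφ : ∀ x, |φ x| ≤ M) (hu : LowerSemicontinuous u) (hφu : ∀ x y, φ x ≤ d x y + u y)
    {K : Set X} (hK : IsCompact K) (hK_nonempty : K.Nonempty) :
    ∃ f ∈ boundedLipschitz d, (∀ x, |f x| ≤ M) ∧ (∀ x, φ x ≤ f x) ∧ ∀ x ∈ K, f x ≤ u x := by
  have hd_nonneg := nonneg_of_self_of_symm_of_triangle hd_self hd_symm hd_triangle
  have : Nonempty K := hK_nonempty.to_subtype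
  have : CompactSpace K := isCompact_iff_compactSpace.1 hK
  have hu_bound (y : K) : -M ≤ u y :=
    calc -M ≤ φ y := neg_le_of_abs_le (hφ y)
      _ ≤ u y := by simpa [hd_self] using hφu y y
  let g : X → ℝ := infConvolution (fun x (y : K) => d x y) fun y => u y
  have hg_meas : Measurable g := by
    have hF : LowerSemicontinuous fun p : X × K => d p.1 p.2 + u p.2 :=
      (hd_lsc.comp (g := fun p : X × K => (p.1, (p.2 : X))) (by fun_prop)).add
        (hu.comp (g := fun p : X × K => (p.2 : X)) (by fun_prop))
    exact (lowerSemicontinuous_iInf_of_compactSpace hF).measurable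
  have hg_sub (x y : X) : g x - g y ≤ d x y :=
    sub_le_iff_le_add'.2 <| infConvolution_le_add (fun z => hd_nonneg x z) hu_bound fun z =>
      add_comm (d x y) _ ▸ hd_triangle x y z
  have hφ_le (x : X) : φ x ≤ min (g x) M :=
    le_min (le_infConvolution fun y => hφu x y) (le_of_abs_le (hφ x))
  have h_abs (x : X) : |min (g x) M| ≤ M :=
    abs_le.2 ⟨(neg_le_of_abs_le (hφ x)).trans (hφ_le x), min_le_right _ _⟩
  refine ⟨fun x => min (g x) M, ⟨hg_meas.min measurable_const, ⟨M, h_abs⟩, fun x y => ?_⟩,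
    h_abs, hφ_le, fun x hx => (min_le_left _ _).trans ?_⟩
  · calc |min (g x) M - min (g y) M| ≤ max |g x - g y| |M - M| := abs_min_sub_min_le_max ..
      _ = |g x - g y| := by simp
      _ ≤ d x y := abs_sub_le_iff.2 ⟨hg_sub x y, hd_symm x y ▸ hg_sub y x⟩
  · simpa [hd_self] using infConvolution_le (c := fun x (y : K) => d x y) (x := x)
      (fun y => hd_nonneg x y) hu_bound ⟨x, hx⟩

variable [PolishSpace X] [BorelSpace X]

theorem exists_isCompact_nonempty_measureReal_compl_lt [Nonempty X] (μ : Measure X)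
    [IsFiniteMeasure μ] {ε : ℝ} (hε : 0 < ε) :
    ∃ K : Set X, IsCompact K ∧ K.Nonempty ∧ μ.real Kᶜ < ε := by
  obtain ⟨K, -, hK, hKμ⟩ := (MeasurableSet.univ (α := X)).exists_isCompact_sdiff_lt
    (measure_ne_top μ _) (ENNReal.ofReal_pos.2 hε).ne'
  rw [← compl_eq_univ_sdiff] at hKμ
  obtain ⟨x₀⟩ := ‹Nonempty X›
  refine ⟨insert x₀ K, hK.insert x₀, insert_nonempty x₀ K, ?_⟩
  calc μ.real (insert x₀ K)ᶜ ≤ μ.real Kᶜ :=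
        measureReal_mono (compl_subset_compl.2 (subset_insert x₀ K))
    _ < ε := (ENNReal.lt_ofReal_iff_toReal_lt (measure_ne_top _ _)).1 hKμ

theorem exists_mem_boundedLipschitz_integral_sub_lt (hd_self : ∀ x, d x x = 0)
    (hd_symm : ∀ x y, d x y = d y x) (hd_triangle : ∀ x y z, d x z ≤ d x y + d y z)
    (hd_lsc : LowerSemicontinuous fun p : X × X => d p.1 p.2) (ν μ : Measure X)
    [IsProbabilityMeasure ν] [IsFiniteMeasure μ] {φ u : X →ᵇ ℝ}
    (hφu : ∀ x y, φ x ≤ d x y + u y) {ε : ℝ} (hε : 0 < ε) :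
    ∃ f ∈ boundedLipschitz d,
      ∫ x, φ x ∂ν - ∫ x, u x ∂μ < ∫ x, f x ∂ν - ∫ x, f x ∂μ + ε := by
  have : Nonempty X := nonempty_of_isProbabilityMeasure ν
  obtain ⟨K, hK, hK_nonempty, hKμ⟩ := exists_isCompact_nonempty_measureReal_compl_lt μ
    (ε := ε / (‖φ‖ + ‖u‖ + 1)) (by positivity)
  obtain ⟨f, hf, hf_abs, hφf, hfu⟩ := exists_mem_boundedLipschitz_between hd_self hd_symm
    hd_triangle hd_lsc φ.norm_coe_le_norm u.continuous.lowerSemicontinuous hφu hK hK_nonempty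
  have hν : ∫ x, φ x ∂ν ≤ ∫ x, f x ∂ν :=
    integral_mono (φ.integrable ν) (integrable_of_mem_boundedLipschitz hf ν) hφf
  have hμ : ∫ x, f x ∂μ ≤ ∫ x, u x ∂μ + μ.real Kᶜ * (‖φ‖ + ‖u‖) :=
    integral_le_integral_add_of_le_on (integrable_of_mem_boundedLipschitz hf μ) (u.integrable μ)
      hK.measurableSet hfu fun x => by
        linarith [le_of_abs_le (hf_abs x), neg_le_of_abs_le (u.norm_coe_le_norm x)]
  have hKμ_mul : μ.real Kᶜ * (‖φ‖ + ‖u‖ + 1) < ε := (lt_div_iff₀ (by positivity)).1 hKμ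
  exact ⟨f, hf, by linarith [measureReal_nonneg (μ := μ) (s := Kᶜ)]⟩

theorem optCost_eq_iSup (hd_self : ∀ x, d x x = 0) (hd_symm : ∀ x y, d x y = d y x)
    (hd_triangle : ∀ x y z, d x z ≤ d x y + d y z)
    (hd_lsc : LowerSemicontinuous fun p : X × X => d p.1 p.2) (ν μ : Measure X)
    [IsProbabilityMeasure ν] [IsProbabilityMeasure μ] :
    optCost d ν μ = ⨆ f ∈ boundedLipschitz d, ENNReal.ofReal (∫ x, f x ∂ν - ∫ x, f x ∂μ) := by
  refine le_antisymm ?_ (iSup₂_le fun f hf => ofReal_integral_sub_integral_le_optCost hf)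
  by_cases h_top : ⨆ f ∈ boundedLipschitz d, ENNReal.ofReal (∫ x, f x ∂ν - ∫ x, f x ∂μ) = ∞
  · exact h_top ▸ le_top
  have h_dual (φ ψ : X →ᵇ ℝ) (hφψ : ∀ p : X × X, φ p.1 + ψ p.2 ≤ d p.1 p.2) :
      ∫ x, φ x ∂ν + ∫ x, ψ x ∂μ ≤
        (⨆ f ∈ boundedLipschitz d, ENNReal.ofReal (∫ x, f x ∂ν - ∫ x, f x ∂μ)).toReal := by
    refine le_of_forall_pos_lt_add fun ε hε => ?_
    obtain ⟨f, hf, h_lt⟩ := exists_mem_boundedLipschitz_integral_sub_lt hd_self hd_symm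
      hd_triangle hd_lsc ν μ (u := -ψ) (fun x y => le_add_neg_iff_add_le.2 (hφψ (x, y))) hε
    have hf_le := (ENNReal.ofReal_le_iff_le_toReal h_top).1 <|
      le_iSup₂_of_le f hf le_rfl
    simp only [BoundedContinuousFunction.coe_neg, Pi.neg_apply, integral_neg] at h_lt
    linarith
  obtain ⟨π, hπ, hπ_le⟩ := exists_coupling_lintegral_le ν μ hd_lsc
    (fun p => nonneg_of_self_of_symm_of_triangle hd_self hd_symm hd_triangle p.1 p.2) h_dual
  rw [ENNReal.ofReal_toReal h_top] at hπ_le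
  exact (iInf₂_le π hπ).trans hπ_le

end KantorovichRubinstein

/-! ### The dual characterization -/

theorem ofReal_mul_optCost_le_iff {X : Type*} [TopologicalSpace X] [PolishSpace X]
    [MeasurableSpace X] [BorelSpace X] {d : X → X → ℝ} (hd_self : ∀ x, d x x = 0)
    (hd_symm : ∀ x y, d x y = d y x) (hd_triangle : ∀ x y z, d x z ≤ d x y + d y z)
    (hd_lsc : LowerSemicontinuous fun p : X × X => d p.1 p.2) (ν μ : Measure X)
    [IsProbabilityMeasure ν] [IsProbabilityMeasure μ] {s : ℝ} (hs : 0 ≤ s) {b : ℝ≥0∞} :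
    ENNReal.ofReal s * optCost d ν μ ≤ b ↔ ∀ f ∈ boundedLipschitz d,
      ENNReal.ofReal (∫ x, s * f x ∂ν - s * ∫ x, f x ∂μ) ≤ b := by
  simp only [optCost_eq_iSup hd_self hd_symm hd_triangle hd_lsc, ENNReal.mul_iSup,
    ← ENNReal.ofReal_mul hs, mul_sub, ← integral_const_mul, iSup_le_iff]

theorem ofReal_integral_exp_le_iff_of_mem_boundedLipschitz {X : Type*} [MeasurableSpace X]
    {d : X → X → ℝ} {α : ℝ → ℝ} (hα_zero : α 0 ≤ 0) (μ : Measure X) [IsProbabilityMeasure μ]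
    {f : X → ℝ} (hf : f ∈ boundedLipschitz d) (s : ℝ) :
    ENNReal.ofReal (∫ x, Real.exp (s * f x) ∂μ) ≤ ⨆ (r : ℝ) (_ : 0 ≤ r),
        ENNReal.ofReal (Real.exp (s * ∫ x, f x ∂μ + (s * r - α r))) ↔
      ∀ ν : Measure X, IsProbabilityMeasure ν →
        ENNReal.ofReal (∫ x, s * f x ∂ν - s * ∫ x, f x ∂μ) ≤
          relEntropy ν μ + monotoneConjugate α s := by
  obtain ⟨M, hM⟩ := hf.2.1
  have h_meas : Measurable fun x => s * f x := hf.1.const_mul s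
  have h_bound (x : X) : |s * f x| ≤ |s| * M := by
    rw [abs_mul]
    gcongr
    exact hM x
  have h_exp : Integrable (fun x => Real.exp (s * f x)) μ :=
    integrable_exp_of_le h_meas fun x => le_of_abs_le (h_bound x)
  rw [ofReal_le_iSup_ofReal_exp_add_iff hα_zero (integral_exp_pos h_exp),
    ofReal_log_integral_exp_sub_le_iff h_meas h_bound]

theorem dual_characterization_metric_cost_general
    {X : Type*} [TopologicalSpace X] [PolishSpace X] [MeasurableSpace X] [BorelSpace X]
    (d : X → X → ℝ)
    (hd_self : ∀ x, d x x = 0)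
    (hd_symm : ∀ x y, d x y = d y x) (hd_triangle : ∀ x y z, d x z ≤ d x y + d y z)
    (hd_lsc : LowerSemicontinuous fun p : X × X => d p.1 p.2)
    (α : ℝ → ℝ)
    (hα_cvx : ConvexOn ℝ (Set.Ici 0) α) (hα_zero : α 0 ≤ 0)
    (μ : Measure X) [IsProbabilityMeasure μ] :
    (∀ ν : Measure X, IsProbabilityMeasure ν →
        extRealFun α (optCost d ν μ) ≤ relEntropy ν μ) ↔
      (∀ f : X → ℝ, Measurable f → (∃ M : ℝ, ∀ x, |f x| ≤ M) →
        (∀ x y, |f x - f y| ≤ d x y) →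
        ∀ s : ℝ, 0 ≤ s →
          ENNReal.ofReal (∫ x, Real.exp (s * f x) ∂μ) ≤
            ⨆ (r : ℝ) (_ : 0 ≤ r),
              ENNReal.ofReal (Real.exp (s * ∫ x, f x ∂μ + (s * r - α r)))) := by
  calc (∀ ν : Measure X, IsProbabilityMeasure ν →
        extRealFun α (optCost d ν μ) ≤ relEntropy ν μ)
      ↔ ∀ ν : Measure X, IsProbabilityMeasure ν → ∀ s, 0 ≤ s →
          ENNReal.ofReal s * optCost d ν μ ≤ relEntropy ν μ + monotoneConjugate α s :=
        forall₂_congr fun ν _ => extRealFun_le_iff hα_cvx hα_zero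
    _ ↔ ∀ ν : Measure X, IsProbabilityMeasure ν → ∀ s, 0 ≤ s → ∀ f ∈ boundedLipschitz d,
          ENNReal.ofReal (∫ x, s * f x ∂ν - s * ∫ x, f x ∂μ) ≤
            relEntropy ν μ + monotoneConjugate α s :=
        forall₄_congr fun ν _ s hs =>
          ofReal_mul_optCost_le_iff hd_self hd_symm hd_triangle hd_lsc ν μ hs
    _ ↔ ∀ f ∈ boundedLipschitz d, ∀ s, 0 ≤ s → ∀ ν : Measure X, IsProbabilityMeasure ν →
          ENNReal.ofReal (∫ x, s * f x ∂ν - s * ∫ x, f x ∂μ) ≤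
            relEntropy ν μ + monotoneConjugate α s := by grind
    _ ↔ ∀ f ∈ boundedLipschitz d, ∀ s, 0 ≤ s → ENNReal.ofReal (∫ x, Real.exp (s * f x) ∂μ) ≤
          ⨆ (r : ℝ) (_ : 0 ≤ r),
            ENNReal.ofReal (Real.exp (s * ∫ x, f x ∂μ + (s * r - α r))) :=
        forall₄_congr fun f hf s _ =>
          (ofReal_integral_exp_le_iff_of_mem_boundedLipschitz hα_zero μ hf s).symm
    _ ↔ _ := by simp only [boundedLipschitz, mem_ofPred_eq, and_imp]

/-- Dual characterization for metric costs: for a lower semicontinuous metric `d` on a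
Polish space and `α` convex increasing with `α(0) = 0`, `μ` satisfies
`α(𝒯_d(·,μ)) ≤ H(·|μ)` if and only if every bounded Borel measurable `d`-Lipschitz(1)
function `f` satisfies, for all `s ≥ 0`,
`∫ e^{sf} dμ ≤ exp(s ∫ f dμ + α⊛(s))`, where `α⊛(s) = sup_{r ≥ 0}(sr − α(r))`.
(The right-hand side is encoded as `sup_{r ≥ 0} exp(s ∫ f dμ + sr − α(r))`.) -/
theorem dual_characterization_metric_cost
    {X : Type*} [TopologicalSpace X] [PolishSpace X] [MeasurableSpace X] [BorelSpace X]
    (d : X → X → ℝ)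
    (hd_self : ∀ x, d x x = 0) (hd_eq : ∀ x y, d x y = 0 → x = y)
    (hd_symm : ∀ x y, d x y = d y x) (hd_triangle : ∀ x y z, d x z ≤ d x y + d y z)
    (hd_lsc : LowerSemicontinuous fun p : X × X => d p.1 p.2)
    (α : ℝ → ℝ)
    (hα_cvx : ConvexOn ℝ (Set.Ici 0) α) (hα_mono : MonotoneOn α (Set.Ici 0))
    (hα_zero : α 0 = 0)
    (μ : Measure X) [IsProbabilityMeasure μ] :
    (∀ ν : Measure X, IsProbabilityMeasure ν →
        extRealFun α (optCost d ν μ) ≤ relEntropy ν μ) ↔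
      (∀ f : X → ℝ, Measurable f → (∃ M : ℝ, ∀ x, |f x| ≤ M) →
        (∀ x y, |f x - f y| ≤ d x y) →
        ∀ s : ℝ, 0 ≤ s →
          ENNReal.ofReal (∫ x, Real.exp (s * f x) ∂μ) ≤
            ⨆ (r : ℝ) (_ : 0 ≤ r),
              ENNReal.ofReal (Real.exp (s * ∫ x, f x ∂μ + (s * r - α r)))) := by
  exact dual_characterization_metric_cost_general d hd_self hd_symm hd_triangle hd_lsc α hα_cvx
    hα_zero.le μ
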